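/- Let A = q·J + (p−q)·B be the expected adjacency matrix of a Stochastic Block Model on n = k·s nodes with k ≥ 2 blocks of size s ≥ 1 and p > q ≥ 0, p > 0, and let R be its Autocovariance matrix with walk length t ≥ 1. Then R_intra > 0 > R_inter: every intra-block pair has strictly positive Autocovariance and every inter-block pair has strictly negative Autocovariance. -/

import Mathlib

open Matrix BigOperators

open Fintype (card)

open scoped Kronecker

/-!
Write `E` for the averaging matrix over all nodes (every entry `1 / n`) and `F` for the matrix that
averages inside each block and removes the global mean. They are orthogonal idempotents and
`A = d • E + s (p - q) • F`, so `(D⁻¹ A) ^ t = E + λ ^ t • F` with `λ = s (p - q) / d` for `t ≥ 1`.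
The term `d dᵀ / vol²` is exactly the contribution of `E`, which leaves `R = (λ ^ t / n) • F`, and
the entries of `F` are `(1 - 1 / k) / s` inside a block and `-1 / (k s)` across blocks.
-/

theorem add_pow_of_mul_eq_zero {S : Type*} [Semiring S] {x y : S} (hxy : x * y = 0)
    (hyx : y * x = 0) {t : ℕ} (ht : t ≠ 0) : (x + y) ^ t = x ^ t + y ^ t := by
  induction t, Nat.one_le_iff_ne_zero.mpr ht using Nat.le_induction with
  | base => simp only [pow_one]
  | succ m hm ih =>
    have hm0 : m ≠ 0 := Nat.one_le_iff_ne_zero.mp hm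
    have hxmy : x ^ m * y = 0 := by rw [← pow_sub_one_mul hm0, mul_assoc, hxy, mul_zero]
    have hymx : y ^ m * x = 0 := by rw [← pow_sub_one_mul hm0, mul_assoc, hyx, mul_zero]
    rw [pow_succ, ih hm0, add_mul, mul_add, mul_add, hxmy, hymx, add_zero, zero_add, ← pow_succ,
      ← pow_succ]

theorem smul_add_smul_pow_of_isIdempotentElem {R S : Type*} [CommSemiring R] [Semiring S]
    [Algebra R S] {e f : S} (he : IsIdempotentElem e) (hf : IsIdempotentElem f) (hef : e * f = 0)
    (hfe : f * e = 0) (a b : R) {t : ℕ} (ht : t ≠ 0) :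
    (a • e + b • f) ^ t = a ^ t • e + b ^ t • f := by
  rw [add_pow_of_mul_eq_zero (by rw [smul_mul_smul_comm, hef, smul_zero])
    (by rw [smul_mul_smul_comm, hfe, smul_zero]) ht, smul_pow, smul_pow, he.pow_eq ht,
    hf.pow_eq ht]

theorem isIdempotentElem_kronecker {𝕜 m n : Type*} [CommSemiring 𝕜] [Fintype m] [Fintype n]
    {M : Matrix m m 𝕜} {N : Matrix n n 𝕜} (hM : IsIdempotentElem M) (hN : IsIdempotentElem N) :
    IsIdempotentElem (M ⊗ₖ N) := by
  rw [IsIdempotentElem, ← mul_kronecker_mul, hM.eq, hN.eq]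

section AveragingMatrix

variable (𝕜 V : Type*) [Field 𝕜] [Fintype V]

/-- The matrix of the map sending a function on `V` to the constant function equal to its mean. -/
def averagingMatrix : Matrix V V 𝕜 :=
  of fun _ _ => (card V : 𝕜)⁻¹

@[simp]
theorem averagingMatrix_apply (u v : V) : averagingMatrix 𝕜 V u v = (card V : 𝕜)⁻¹ :=
  rfl

theorem isIdempotentElem_averagingMatrix : IsIdempotentElem (averagingMatrix 𝕜 V) := by
  ext u v
  have hcard : (card V : 𝕜) * ((card V : 𝕜)⁻¹ * (card V : 𝕜)⁻¹) = (card V : 𝕜)⁻¹ := by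
    simpa only [inv_inv, mul_assoc] using inv_mul_mul_self (card V : 𝕜)⁻¹
  simpa [mul_apply] using hcard

theorem averagingMatrix_mulVec_one [CharZero 𝕜] [Nonempty V] :
    averagingMatrix 𝕜 V *ᵥ 1 = 1 := by
  ext u
  simp [mulVec, dotProduct]

theorem averagingMatrix_prod (W : Type*) [Fintype W] :
    averagingMatrix 𝕜 (V × W) = averagingMatrix 𝕜 V ⊗ₖ averagingMatrix 𝕜 W := by
  ext u v
  simp [mul_comm]

theorem of_one_eq_card_smul_averagingMatrix [CharZero 𝕜] [Nonempty V] :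
    (of fun _ _ => 1 : Matrix V V 𝕜) = (card V : 𝕜) • averagingMatrix 𝕜 V := by
  ext u v
  simp

variable {𝕜 V}

theorem smul_averagingMatrix_add_smul_mulVec_one [CharZero 𝕜] [Nonempty V]
    {F : Matrix V V 𝕜} (hFE : F * averagingMatrix 𝕜 V = 0) (d μ : 𝕜) :
    (d • averagingMatrix 𝕜 V + μ • F) *ᵥ 1 = fun _ => d := by
  have hF : F *ᵥ 1 = 0 := by
    rw [← averagingMatrix_mulVec_one 𝕜 V, mulVec_mulVec, hFE, zero_mulVec]
  ext u
  simp [add_mulVec, smul_mulVec, hF, averagingMatrix_mulVec_one]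

end AveragingMatrix

section Autocovariance

variable {𝕜 V : Type*} [Field 𝕜] [Fintype V] [DecidableEq V]

/-- The Autocovariance matrix `(D / vol) (D⁻¹ A) ^ t - d dᵀ / vol²` at walk length `t` of the
weighted graph with adjacency matrix `A`, where `d = A *ᵥ 1` is the vector of (row) degrees. -/
noncomputable def autocovariance (A : Matrix V V 𝕜) (t : ℕ) : Matrix V V 𝕜 :=
  (∑ u, (A *ᵥ 1) u)⁻¹ • (diagonal (A *ᵥ 1) * ((diagonal (A *ᵥ 1))⁻¹ * A) ^ t) -
    ((∑ u, (A *ᵥ 1) u) ^ 2)⁻¹ • vecMulVec (A *ᵥ 1) (A *ᵥ 1)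

theorem autocovariance_of_regular {A : Matrix V V 𝕜} {d : 𝕜} (hA : A *ᵥ 1 = fun _ => d) (t : ℕ) :
    autocovariance A t =
      (card V * d)⁻¹ • (d • 1 * ((d • 1 : Matrix V V 𝕜)⁻¹ * A) ^ t) -
        ((card V * d) ^ 2)⁻¹ • of fun _ _ => d * d := by
  simp only [autocovariance, hA, smul_one_eq_diagonal, Finset.sum_const, Finset.card_univ,
    nsmul_eq_mul]
  rfl

theorem autocovariance_smul_averagingMatrix_add_smul [CharZero 𝕜] [Nonempty V]
    {F : Matrix V V 𝕜} (hF : IsIdempotentElem F) (hEF : averagingMatrix 𝕜 V * F = 0)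
    (hFE : F * averagingMatrix 𝕜 V = 0) {d : 𝕜} (hd : d ≠ 0) (μ : 𝕜) {t : ℕ} (ht : t ≠ 0) :
    autocovariance (d • averagingMatrix 𝕜 V + μ • F) t = ((μ / d) ^ t / card V) • F := by
  have hV : (card V : 𝕜) ≠ 0 := Nat.cast_ne_zero.mpr Fintype.card_ne_zero
  have hinv : (d • 1 : Matrix V V 𝕜)⁻¹ = d⁻¹ • 1 :=
    inv_eq_right_inv (by simp [smul_smul, hd])
  have hwalk : ((d • 1 : Matrix V V 𝕜)⁻¹ * (d • averagingMatrix 𝕜 V + μ • F)) ^ t =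
      averagingMatrix 𝕜 V + (μ / d) ^ t • F := by
    rw [hinv, smul_one_mul, smul_add, smul_smul, smul_smul, inv_mul_cancel₀ hd, inv_mul_eq_div,
      smul_add_smul_pow_of_isIdempotentElem (isIdempotentElem_averagingMatrix 𝕜 V) hF hEF hFE _ _
        ht, one_pow, one_smul]
  rw [autocovariance_of_regular (smul_averagingMatrix_add_smul_mulVec_one hFE d μ), hwalk]
  ext u v
  simp only [smul_one_mul, Matrix.sub_apply, Matrix.smul_apply, Matrix.add_apply, of_apply,
    averagingMatrix_apply, smul_eq_mul]
  field_simp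
  ring

end Autocovariance

section BlockModel

variable {𝕜 : Type*} (ι κ : Type*) [Field 𝕜]

/-- The common degree of the nodes in the expected Stochastic Block Model. -/
def sbmDegree [Fintype ι] [Fintype κ] (p q : 𝕜) : 𝕜 :=
  card κ * p + (card ι - 1) * card κ * q

/-- The expected adjacency matrix of the Stochastic Block Model with blocks indexed by `ι`, each a
copy of `κ`, intra-block density `p` and inter-block density `q`. -/
def sbmAdjacency [DecidableEq ι] (p q : 𝕜) : Matrix (ι × κ) (ι × κ) 𝕜 :=
  q • (of fun _ _ => 1) + (p - q) • of fun u v => if u.1 = v.1 then 1 else 0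

variable [Fintype ι] [DecidableEq ι] [Fintype κ]

variable (𝕜) in
/-- The projection onto functions that are constant on the blocks and have mean zero: averaging
inside each block, composed with removal of the mean over the blocks. -/
def blockContrast : Matrix (ι × κ) (ι × κ) 𝕜 :=
  (1 - averagingMatrix 𝕜 ι) ⊗ₖ averagingMatrix 𝕜 κ

theorem blockContrast_apply (u v : ι × κ) :
    blockContrast 𝕜 ι κ u v =
      ((if u.1 = v.1 then 1 else 0) - (card ι : 𝕜)⁻¹) * (card κ : 𝕜)⁻¹ := by
  simp [blockContrast, one_apply]

theorem isIdempotentElem_blockContrast : IsIdempotentElem (blockContrast 𝕜 ι κ) :=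
  isIdempotentElem_kronecker (isIdempotentElem_averagingMatrix 𝕜 ι).one_sub
    (isIdempotentElem_averagingMatrix 𝕜 κ)

theorem averagingMatrix_mul_blockContrast :
    averagingMatrix 𝕜 (ι × κ) * blockContrast 𝕜 ι κ = 0 := by
  rw [averagingMatrix_prod, blockContrast, ← mul_kronecker_mul,
    (isIdempotentElem_averagingMatrix 𝕜 ι).mul_one_sub_self, zero_kronecker]

theorem blockContrast_mul_averagingMatrix :
    blockContrast 𝕜 ι κ * averagingMatrix 𝕜 (ι × κ) = 0 := by
  rw [averagingMatrix_prod, blockContrast, ← mul_kronecker_mul,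
    (isIdempotentElem_averagingMatrix 𝕜 ι).one_sub_mul_self, zero_kronecker]

theorem of_ite_fst_eq_card_smul [CharZero 𝕜] [Nonempty κ] :
    (of fun u v => if u.1 = v.1 then 1 else 0 : Matrix (ι × κ) (ι × κ) 𝕜) =
      (card κ : 𝕜) • (averagingMatrix 𝕜 (ι × κ) + blockContrast 𝕜 ι κ) := by
  have hsum : averagingMatrix 𝕜 (ι × κ) + blockContrast 𝕜 ι κ = 1 ⊗ₖ averagingMatrix 𝕜 κ := by
    rw [averagingMatrix_prod, blockContrast, ← add_kronecker, add_sub_cancel]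
  rw [hsum]
  ext u v
  simp [one_apply]

theorem sbmAdjacency_eq [CharZero 𝕜] [Nonempty ι] [Nonempty κ] (p q : 𝕜) :
    sbmAdjacency ι κ p q = sbmDegree ι κ p q • averagingMatrix 𝕜 (ι × κ) +
      (card κ * (p - q)) • blockContrast 𝕜 ι κ := by
  rw [sbmAdjacency, of_one_eq_card_smul_averagingMatrix, of_ite_fst_eq_card_smul, sbmDegree,
    Fintype.card_prod, Nat.cast_mul]
  module

theorem sbmAdjacency_mulVec_one [CharZero 𝕜] [Nonempty ι] [Nonempty κ] (p q : 𝕜) :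
    sbmAdjacency ι κ p q *ᵥ 1 = fun _ => sbmDegree ι κ p q := by
  rw [sbmAdjacency_eq]
  exact smul_averagingMatrix_add_smul_mulVec_one (blockContrast_mul_averagingMatrix ι κ) _ _

theorem autocovariance_sbmAdjacency [CharZero 𝕜] [Nonempty ι] [Nonempty κ] [DecidableEq κ]
    {p q : 𝕜} (hd : sbmDegree ι κ p q ≠ 0) {t : ℕ} (ht : t ≠ 0) :
    autocovariance (sbmAdjacency ι κ p q) t =
      ((card κ * (p - q) / sbmDegree ι κ p q) ^ t / card (ι × κ)) • blockContrast 𝕜 ι κ := by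
  rw [sbmAdjacency_eq]
  exact autocovariance_smul_averagingMatrix_add_smul (isIdempotentElem_blockContrast ι κ)
    (averagingMatrix_mul_blockContrast ι κ) (blockContrast_mul_averagingMatrix ι κ) hd _ ht

end BlockModel

section Signs

variable {𝕜 ι κ : Type*} [Field 𝕜] [LinearOrder 𝕜] [IsStrictOrderedRing 𝕜] [Fintype ι] [Fintype κ]

theorem sbmDegree_pos [Nonempty ι] [Nonempty κ] {p q : 𝕜} (hq : 0 ≤ q) (hp : 0 < p) :
    0 < sbmDegree ι κ p q := by
  have hι : (0 : 𝕜) ≤ card ι - 1 :=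
    sub_nonneg.mpr (Nat.one_le_cast.mpr (Nat.one_le_iff_ne_zero.mpr Fintype.card_ne_zero))
  unfold sbmDegree
  positivity

variable [DecidableEq ι] {u v : ι × κ}

theorem blockContrast_pos_of_fst_eq [Nontrivial ι] (huv : u.1 = v.1) :
    0 < blockContrast 𝕜 ι κ u v := by
  have : Nonempty κ := ⟨u.2⟩
  have hκ : (0 : 𝕜) < (card κ : 𝕜)⁻¹ := inv_pos.mpr (Nat.cast_pos.mpr Fintype.card_pos)
  have hι : (card ι : 𝕜)⁻¹ < 1 := inv_lt_one_of_one_lt₀ (Nat.one_lt_cast.mpr Fintype.one_lt_card)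
  rw [blockContrast_apply, if_pos huv]
  exact mul_pos (sub_pos.mpr hι) hκ

theorem blockContrast_neg_of_fst_ne (huv : u.1 ≠ v.1) : blockContrast 𝕜 ι κ u v < 0 := by
  have : Nonempty ι := ⟨u.1⟩
  have : Nonempty κ := ⟨u.2⟩
  have hκ : (0 : 𝕜) < (card κ : 𝕜)⁻¹ := inv_pos.mpr (Nat.cast_pos.mpr Fintype.card_pos)
  have hι : (0 : 𝕜) < (card ι : 𝕜)⁻¹ := inv_pos.mpr (Nat.cast_pos.mpr Fintype.card_pos)
  rw [blockContrast_apply, if_neg huv, zero_sub]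
  exact mul_neg_of_neg_of_pos (neg_neg_of_pos hι) hκ

theorem sbm_autocovariance_signs_general [Nontrivial ι] [DecidableEq κ] {p q : 𝕜} (hpq : q < p)
    (hd : 0 < sbmDegree ι κ p q) {t : ℕ} (ht : t ≠ 0) (u v : ι × κ) :
    (u.1 = v.1 → 0 < autocovariance (sbmAdjacency ι κ p q) t u v) ∧
    (u.1 ≠ v.1 → autocovariance (sbmAdjacency ι κ p q) t u v < 0) := by
  have : Nonempty κ := ⟨u.2⟩
  have hκ : (0 : 𝕜) < card κ := Nat.cast_pos.mpr Fintype.card_pos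
  have hn : (0 : 𝕜) < card (ι × κ) := Nat.cast_pos.mpr Fintype.card_pos
  have hcoeff : 0 < (card κ * (p - q) / sbmDegree ι κ p q) ^ t / card (ι × κ) :=
    div_pos (pow_pos (div_pos (mul_pos hκ (sub_pos.mpr hpq)) hd) t) hn
  rw [autocovariance_sbmAdjacency ι κ hd.ne' ht, Matrix.smul_apply]
  exact ⟨fun huv => smul_pos hcoeff (blockContrast_pos_of_fst_eq huv),
    fun huv => smul_neg_of_pos_of_neg hcoeff (blockContrast_neg_of_fst_ne huv)⟩

end Signs

/-- For the expected SBM adjacency matrix and its Autocovariance matrix at walk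
length `t ≥ 1`, every intra-block pair has a strictly positive Autocovariance score and every
inter-block pair has a strictly negative Autocovariance score: `R_intra > 0 > R_inter`. -/
theorem sbm_autocovariance_signs (k s : ℕ) (hk : 2 ≤ k) (hs : 1 ≤ s)
    (p q : ℝ) (hq : 0 ≤ q) (hpq : q < p) (hp : 0 < p)
    (J B A : Matrix (Fin k × Fin s) (Fin k × Fin s) ℝ)
    (hJ : J = Matrix.of fun _ _ => (1 : ℝ))
    (hB : B = Matrix.of fun u v => if u.1 = v.1 then (1 : ℝ) else 0)
    (hA : A = q • J + (p - q) • B)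
    (dval : ℝ) (hd : dval = (s : ℝ) * p + ((k : ℝ) - 1) * (s : ℝ) * q)
    (D : Matrix (Fin k × Fin s) (Fin k × Fin s) ℝ) (hD : D = dval • 1)
    (vol : ℝ) (hvol : vol = ((k : ℝ) * (s : ℝ)) * dval)
    (t : ℕ) (ht : 1 ≤ t)
    (R : Matrix (Fin k × Fin s) (Fin k × Fin s) ℝ)
    (hR : R = vol⁻¹ • (D * (D⁻¹ * A) ^ t) -
      (vol ^ 2)⁻¹ • Matrix.of (fun _ _ : Fin k × Fin s => dval * dval)) :
    (∀ u v : Fin k × Fin s, u.1 = v.1 → 0 < R u v) ∧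
    (∀ u v : Fin k × Fin s, u.1 ≠ v.1 → R u v < 0) := by
  have : Nontrivial (Fin k) := Fin.nontrivial_iff_two_le.mpr hk
  have : Nonempty (Fin s) := Fin.pos_iff_nonempty.mp hs
  have hdeg : dval = sbmDegree (Fin k) (Fin s) p q := by
    rw [hd, sbmDegree, Fintype.card_fin, Fintype.card_fin]
  have hRA : R = autocovariance (sbmAdjacency (Fin k) (Fin s) p q) t := by
    rw [autocovariance_of_regular (sbmAdjacency_mulVec_one _ _ p q), Fintype.card_prod,
      Fintype.card_fin, Fintype.card_fin, Nat.cast_mul, ← hdeg, ← hvol, ← hD, hR, hA, hJ, hB,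
      sbmAdjacency]
  have signs := sbm_autocovariance_signs_general hpq
    (sbmDegree_pos (ι := Fin k) (κ := Fin s) hq hp) (Nat.one_le_iff_ne_zero.mp ht)
  rw [hRA]
  exact ⟨fun u v => (signs u v).1, fun u v => (signs u v).2⟩
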